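/- Let d = 3, λ > 0, and g_λ(x) = e^{−λ|x|}/(4π|x|). Under Assumption (A), let p : ℝ³ → ℂ be a continuous function. Then the functions Ψ_N(x) := (1/N)·Σ_{j=1}^N p(x_{N,j})·g_λ(x − x_{N,j}) converge strongly in L²(ℝ³) to the function (g_λ * (p·U))(x) = ∫_{ℝ³} g_λ(x − y)·p(y)·U(y) dy as N → ∞; in particular lim_{N→∞} ‖Ψ_N‖_{L²(ℝ³)} = ‖g_λ * (p·U)‖_{L²(ℝ³)}. (This is the singular part of the recovery sequence in the Γ-limsup construction, specialized to the free Laplacian A = 0, V = 0, for which G₀^λ(x,y) = g_λ(x − y) and R₀^λ f = g_λ * f.) -/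

import Mathlib

open MeasureTheory Filter Finset Real Topology

noncomputable section

/-!
With `τ_w g = g (· - w)`, the map `w ↦ p w • τ_w g` is continuous into `L^q`, because translations
act continuously there. Its averages over the points, which all lie in a compact set `K`, belong
to the closed convex hull of the compact image of `K`, which is compact. Weak convergence of the
empirical measures makes the averages converge against every continuous functional, and on a
compact set this is norm convergence. The limit is a Bochner integral in `L^q`, which agrees
almost everywhere with the pointwise integral.
-/

open scoped ENNReal

theorem integrable_of_ae_mem_isCompact {X H : Type*} [TopologicalSpace X]
    [MeasurableSpace X] [OpensMeasurableSpace X] [NormedAddCommGroup H]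
    [SecondCountableTopologyEither X H] {μ : Measure X} [IsFiniteMeasure μ] {K : Set X}
    (hK : IsCompact K) (hμK : ∀ᵐ w ∂μ, w ∈ K) {f : X → H} (hf : Continuous f) :
    Integrable f μ := by
  obtain ⟨M, hM⟩ := hK.exists_bound_of_continuousOn hf.continuousOn
  exact .of_bound hf.aestronglyMeasurable M (hμK.mono hM)

theorem tendsto_of_forall_dual_tendsto {ι H : Type*} [NormedAddCommGroup H] [NormedSpace ℝ H]
    {l : Filter ι} {S : Set H} (hS : IsCompact S) {u : ι → H} {z : H} (hu : ∀ i, u i ∈ S)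
    (hweak : ∀ φ : StrongDual ℝ H, Tendsto (fun i => φ (u i)) l (𝓝 (φ z))) :
    Tendsto u l (𝓝 z) := by
  refine hS.tendsto_nhds_of_unique_mapClusterPt (.of_forall hu) fun y _ hy => ?_
  obtain ⟨F, hF, hFy⟩ := mapClusterPt_iff_ultrafilter.1 hy
  refine (SeparatingDual.eq_iff_forall_dual_eq (R := ℝ)).2 fun φ => ?_
  exact tendsto_nhds_unique ((φ.continuous.tendsto y).comp hFy) ((hweak φ).mono_left hF)

section WeakConvergence

variable {X ι : Type*} [TopologicalSpace X] [HasOuterApproxClosed X]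
  [MeasurableSpace X] [BorelSpace X] {l : Filter ι} [l.NeBot]
  {ν : ι → ProbabilityMeasure X} {ν₀ : ProbabilityMeasure X} {K : Set X}

theorem ae_mem_of_tendsto_probabilityMeasure (hν : Tendsto ν l (𝓝 ν₀)) (hK : IsClosed K)
    (hνK : ∀ i, ∀ᵐ w ∂(ν i : Measure X), w ∈ K) : ∀ᵐ w ∂(ν₀ : Measure X), w ∈ K := by
  have hcompl : ∀ i, (ν i : Measure X) Kᶜ = 0 := fun i => mem_ae_iff.1 (hνK i)
  have hle := ProbabilityMeasure.le_liminf_measure_open_of_tendsto hν hK.isOpen_compl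
  simp only [hcompl, liminf_const, nonpos_iff_eq_zero] at hle
  exact mem_ae_iff.2 hle

variable [T2Space X]

theorem tendsto_integral_real_of_isCompact (hν : Tendsto ν l (𝓝 ν₀)) (hK : IsCompact K)
    (hνK : ∀ i, ∀ᵐ w ∂(ν i : Measure X), w ∈ K) {f : X → ℝ} (hf : Continuous f) :
    Tendsto (fun i => ∫ w, f w ∂(ν i : Measure X)) l (𝓝 (∫ w, f w ∂(ν₀ : Measure X))) := by
  obtain ⟨M, hM⟩ := hK.exists_bound_of_continuousOn hf.continuousOn
  let clamp : BoundedContinuousFunction X ℝ := .ofNormedAddCommGroup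
    (fun w => max (-M) (min M (f w))) (by fun_prop) |M| fun w =>
      abs_le.2 ⟨(neg_le_neg (le_abs_self M)).trans (le_max_left _ _),
        max_le (neg_le_abs M) ((min_le_left _ _).trans (le_abs_self M))⟩
  have clamp_eq : ∀ w ∈ K, clamp w = f w := fun w hw => by
    have ⟨h₁, h₂⟩ := abs_le.1 (hM w hw)
    exact (congrArg (max (-M)) (min_eq_right h₂)).trans (max_eq_right h₁)
  have hν₀K := ae_mem_of_tendsto_probabilityMeasure hν hK.isClosed hνK
  have hclamp := ProbabilityMeasure.tendsto_iff_forall_integral_tendsto.1 hν clamp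
  rw [integral_congr_ae (hν₀K.mono clamp_eq)] at hclamp
  exact hclamp.congr fun i => integral_congr_ae ((hνK i).mono clamp_eq)

theorem tendsto_integral_of_isCompact {H : Type*} [NormedAddCommGroup H] [NormedSpace ℝ H]
    [CompleteSpace H] [SecondCountableTopologyEither X H]
    (hν : Tendsto ν l (𝓝 ν₀)) (hK : IsCompact K)
    (hνK : ∀ i, ∀ᵐ w ∂(ν i : Measure X), w ∈ K) {f : X → H} (hf : Continuous f) :
    Tendsto (fun i => ∫ w, f w ∂(ν i : Measure X)) l (𝓝 (∫ w, f w ∂(ν₀ : Measure X))) := by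
  have hull_compact : IsCompact (closure (convexHull ℝ (f '' K))) :=
    (hK.image hf).totallyBounded.convexHull.closure.isCompact_of_isClosed isClosed_closure
  have hfi : ∀ i, Integrable f (ν i : Measure X) := fun i =>
    integrable_of_ae_mem_isCompact hK (hνK i) hf
  have hfi₀ : Integrable f (ν₀ : Measure X) :=
    integrable_of_ae_mem_isCompact hK (ae_mem_of_tendsto_probabilityMeasure hν hK.isClosed hνK) hf
  refine tendsto_of_forall_dual_tendsto hull_compact (fun i => ?_) fun φ => ?_
  · refine (convex_convexHull ℝ _).closure.integral_mem isClosed_closure ?_ (hfi i)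
    filter_upwards [hνK i] with w hw
    exact subset_closure (subset_convexHull ℝ _ ⟨w, hw, rfl⟩)
  · simp only [← φ.integral_comp_comm (hfi _), ← φ.integral_comp_comm hfi₀]
    exact tendsto_integral_real_of_isCompact hν hK hνK (φ.continuous.comp hf)

end WeakConvergence

section EmpiricalMeasure

variable {X : Type*} [MeasurableSpace X]

/-- The uniform probability measure on the points `x 0, …, x (n - 1)`, counted with multiplicity;
`n ≠ 0` makes it a probability measure. -/
def empiricalMeasure {n : ℕ} [NeZero n] (x : Fin n → X) : ProbabilityMeasure X :=
  ⟨(n : ℝ≥0∞)⁻¹ • ∑ j, Measure.dirac (x j), ⟨by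
    simp [ENNReal.inv_mul_cancel, NeZero.ne]⟩⟩

namespace empiricalMeasure

variable [MeasurableSingletonClass X]

theorem ae_of_forall {n : ℕ} [NeZero n] {x : Fin n → X} {P : X → Prop} (hP : ∀ j, P (x j)) :
    ∀ᵐ w ∂(empiricalMeasure x : Measure X), P w := by
  refine Measure.ae_smul_measure ?_ _
  simp [ae_iff, hP]

theorem integral_eq {H : Type*} [NormedAddCommGroup H] [NormedSpace ℝ H] [CompleteSpace H]
    {n : ℕ} [NeZero n] (x : Fin n → X) (f : X → H) :
    ∫ w, f w ∂(empiricalMeasure x : Measure X) = (n : ℝ)⁻¹ • ∑ j, f (x j) := by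
  rw [empiricalMeasure, ProbabilityMeasure.coe_mk, integral_smul_measure,
    integral_finsetSum_measure fun j _ => integrable_dirac enorm_lt_top]
  simp only [integral_dirac, ENNReal.toReal_inv, ENNReal.toReal_natCast]

theorem tendsto_of_forall_average_tendsto [TopologicalSpace X] [OpensMeasurableSpace X]
    {x : (N : ℕ) → Fin N → X} {ν : Measure X} [IsProbabilityMeasure ν]
    (hA : ∀ f : X → ℂ, Continuous f → (∃ M, ∀ y, ‖f y‖ ≤ M) →
      Tendsto (fun N : ℕ => (N : ℂ)⁻¹ * ∑ j : Fin N, f (x N j)) atTop (𝓝 (∫ y, f y ∂ν))) :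
    Tendsto (fun n => empiricalMeasure (x (n + 1))) atTop
      (𝓝 (⟨ν, inferInstance⟩ : ProbabilityMeasure X)) := by
  refine (ProbabilityMeasure.tendsto_iff_forall_integral_rclike_tendsto ℂ).2 fun f => ?_
  refine ((hA f f.continuous ⟨‖f‖, f.norm_coe_le_norm⟩).comp (tendsto_add_atTop_nat 1)).congr
    fun n => ?_
  simp [integral_eq]

end empiricalMeasure

end EmpiricalMeasure

theorem tendsto_eLpNorm_of_ae_eq {ι Y F : Type*} [MeasurableSpace Y] [NormedAddCommGroup F]
    {μ : Measure Y} {q : ℝ≥0∞} [Fact (1 ≤ q)] {l : Filter ι} {u : ι → Lp F q μ} {z : Lp F q μ}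
    (hu : Tendsto u l (𝓝 z))
    {f : ι → Y → F} {f₀ : Y → F} (hf : ∀ i, u i =ᵐ[μ] f i) (hf₀ : z =ᵐ[μ] f₀) :
    Tendsto (fun i => eLpNorm (fun y => f i y - f₀ y) q μ) l (𝓝 0) ∧
      Tendsto (fun i => eLpNorm (f i) q μ) l (𝓝 (eLpNorm f₀ q μ)) := by
  constructor
  · exact ((Lp.tendsto_Lp_iff_tendsto_eLpNorm' u z).1 hu).congr fun i =>
      eLpNorm_congr_ae ((hf i).sub hf₀)
  · have henorm := hu.enorm
    simp only [Lp.enorm_def] at henorm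
    rw [← eLpNorm_congr_ae hf₀]
    exact henorm.congr fun i => eLpNorm_congr_ae (hf i)

section BochnerIntegralLp

variable {X Y F : Type*} [MeasurableSpace X] [MeasurableSpace Y] [NormedAddCommGroup F]
  [NormedSpace ℝ F] {ν : Measure X} {μ : Measure Y} {q : ℝ≥0∞} [Fact (1 ≤ q)] {s : Set Y}

/-- Multiplication by the indicator of a set `s` of finite measure, as a continuous linear map from
`Lp F q μ` to `Lp F 1 μ`; it makes the integral over `s` a continuous functional on `Lp F q μ`. -/
def indicatorL1 (hs : MeasurableSet s) (hμs : μ s ≠ ∞) : Lp F q μ →L[ℝ] Lp F 1 μ :=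
  have : Fact (1 ≤ q.conjExponent) := ⟨le_self_add⟩
  have : q.HolderConjugate q.conjExponent := .conjExponent Fact.out
  (ContinuousLinearMap.lsmul ℝ ℝ).holderL μ q.conjExponent q 1
    (indicatorConstLp q.conjExponent hs hμs 1)

namespace indicatorL1

theorem coeFn_ae_eq (hs : MeasurableSet s) (hμs : μ s ≠ ∞) (h : Lp F q μ) :
    indicatorL1 hs hμs h =ᵐ[μ] s.indicator h := by
  have : Fact (1 ≤ q.conjExponent) := ⟨le_self_add⟩
  have : q.HolderConjugate q.conjExponent := .conjExponent Fact.out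
  filter_upwards [(ContinuousLinearMap.lsmul ℝ ℝ).coeFn_holder (r := 1)
      (indicatorConstLp q.conjExponent hs hμs (1 : ℝ)) h,
    indicatorConstLp_coeFn (p := q.conjExponent) (hs := hs) (hμs := hμs) (c := (1 : ℝ))]
    with y hholder hone
  rw [indicatorL1, ContinuousLinearMap.holderL_apply_apply, hholder, hone]
  by_cases hy : y ∈ s <;> simp [hy]

theorem integral_eq (hs : MeasurableSet s) (hμs : μ s ≠ ∞) (h : Lp F q μ) :
    ∫ y, indicatorL1 hs hμs h y ∂μ = ∫ y in s, h y ∂μ := by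
  rw [integral_congr_ae (coeFn_ae_eq hs hμs h), integral_indicator hs]

theorem norm_eq (hs : MeasurableSet s) (hμs : μ s ≠ ∞) (h : Lp F q μ) :
    ‖indicatorL1 hs hμs h‖ = ∫ y in s, ‖h y‖ ∂μ := by
  rw [L1.norm_eq_integral_norm, ← integral_indicator hs]
  exact integral_congr_ae ((coeFn_ae_eq hs hμs h).mono fun y hy =>
    (congrArg norm hy).trans (norm_indicator_eq_indicator_norm h y))

end indicatorL1

variable [SFinite ν] {Φ : X → Lp F q μ} {f : X → Y → F}

theorem integrable_prod_restrict_of_Lp [SFinite μ]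
    (hf : AEStronglyMeasurable (Function.uncurry f) (ν.prod μ)) (hΦ : Integrable Φ ν)
    (hΦf : ∀ w, Φ w =ᵐ[μ] f w) (hs : MeasurableSet s) (hμs : μ s ≠ ∞) :
    Integrable (Function.uncurry f) (ν.prod (μ.restrict s)) := by
  have hle : ν.prod (μ.restrict s) ≤ ν.prod μ := by
    rw [← ν.restrict_univ, Measure.prod_restrict, Measure.restrict_univ]
    exact Measure.restrict_le_self
  rw [integrable_prod_iff (hf.mono_measure hle)]
  have hfin : IsFiniteMeasure (μ.restrict s) := isFiniteMeasure_restrict.2 hμs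
  refine ⟨.of_forall fun w => ?_, ?_⟩
  · exact (((Lp.memLp (Φ w)).restrict s).integrable Fact.out).congr (ae_restrict_of_ae (hΦf w))
  · refine ((indicatorL1 hs hμs).integrable_comp hΦ).norm.congr (.of_forall fun w => ?_)
    refine (indicatorL1.norm_eq hs hμs (Φ w)).trans ?_
    exact integral_congr_ae (ae_restrict_of_ae ((hΦf w).fun_comp norm))

variable [CompleteSpace F]

theorem integral_Lp_ae_eq_integral [SigmaFinite μ]
    (hf : AEStronglyMeasurable (Function.uncurry f) (ν.prod μ)) (hΦ : Integrable Φ ν)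
    (hΦf : ∀ w, Φ w =ᵐ[μ] f w) : (∫ w, Φ w ∂ν : Lp F q μ) =ᵐ[μ] fun y => ∫ w, f w y ∂ν := by
  have hprod : ∀ s, MeasurableSet s → μ s < ∞ →
      Integrable (Function.uncurry f) (ν.prod (μ.restrict s)) := fun s hs hμs =>
    integrable_prod_restrict_of_Lp hf hΦ hΦf hs hμs.ne
  refine ae_eq_of_forall_setIntegral_eq_of_sigmaFinite (fun s _ hμs => ?_)
    (fun s hs hμs => (hprod s hs hμs).integral_prod_right) fun s hs hμs => ?_
  · have : IsFiniteMeasure (μ.restrict s) := isFiniteMeasure_restrict.2 hμs.ne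
    exact ((Lp.memLp _).restrict s).integrable Fact.out
  let setIntegral : Lp F q μ →L[ℝ] F :=
    (L1.integralCLM (E := F) (μ := μ)).comp (indicatorL1 hs hμs.ne)
  have setIntegral_apply : ∀ h, setIntegral h = ∫ y in s, h y ∂μ := fun h => by
    rw [← indicatorL1.integral_eq hs hμs.ne h, ← L1.integral_eq_integral, L1.integral_eq]; rfl
  calc ∫ y in s, (∫ w, Φ w ∂ν : Lp F q μ) y ∂μ
      = ∫ w, setIntegral (Φ w) ∂ν := by
        rw [← setIntegral_apply, setIntegral.integral_comp_comm hΦ]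
    _ = ∫ w, ∫ y in s, f w y ∂μ ∂ν := by
        simp only [setIntegral_apply]
        exact integral_congr_ae <| .of_forall fun w =>
          integral_congr_ae (ae_restrict_of_ae (hΦf w))
    _ = ∫ y in s, ∫ w, f w y ∂ν ∂μ := integral_integral_swap (hprod s hs hμs)

end BochnerIntegralLp

section ExponentialDecay

variable {E : Type*} [NormedAddCommGroup E] [NormedSpace ℝ E] [FiniteDimensional ℝ E]
  [Nontrivial E] [MeasurableSpace E] [BorelSpace E] {μ : Measure E} [μ.IsAddHaarMeasure] {s b : ℝ}

theorem integrable_norm_rpow_mul_exp_neg_mul_norm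
    (hs : -Module.finrank ℝ E < s) (hb : 0 < b) :
    Integrable (fun v : E => ‖v‖ ^ s * exp (-(b * ‖v‖))) μ := by
  refine (integrable_fun_norm_addHaar μ (f := fun r => r ^ s * exp (-(b * r)))).2 ?_
  have hdim : ((Module.finrank ℝ E - 1 : ℕ) : ℝ) = Module.finrank ℝ E - 1 := by
    rw [Nat.cast_sub Module.finrank_pos, Nat.cast_one]
  refine (integrableOn_rpow_mul_exp_neg_mul_rpow (s := Module.finrank ℝ E - 1 + s) (b := b)
    (by linarith) one_pos hb).congr_fun (fun r hr => ?_) measurableSet_Ioi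
  simp only [rpow_one, neg_mul]
  rw [rpow_add hr, ← hdim, rpow_natCast, smul_eq_mul, mul_assoc]

theorem memLp_norm_rpow_mul_exp_neg_mul_norm {q : ℝ≥0∞} (hq₀ : q ≠ 0) (hq : q ≠ ∞)
    (hs : -Module.finrank ℝ E < s * q.toReal) (hb : 0 < b) :
    MemLp (fun v : E => ‖v‖ ^ s * exp (-(b * ‖v‖))) q μ := by
  have hq_pos : 0 < q.toReal := ENNReal.toReal_pos hq₀ hq
  refine (integrable_norm_rpow_iff (Measurable.aestronglyMeasurable (by fun_prop)) hq₀ hq).1 ?_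
  refine (integrable_norm_rpow_mul_exp_neg_mul_norm hs (mul_pos hb hq_pos)).congr
    (.of_forall fun v => ?_)
  have hnorm : 0 ≤ ‖v‖ ^ s := rpow_nonneg (norm_nonneg v) s
  simp only [norm_mul, norm_of_nonneg hnorm, norm_of_nonneg (exp_pos _).le]
  rw [mul_rpow hnorm (exp_pos _).le, ← rpow_mul (norm_nonneg v), ← exp_mul, neg_mul,
    mul_right_comm]

end ExponentialDecay

theorem memLp_two_exp_neg_mul_norm_div {lam : ℝ} (hlam : 0 < lam) :
    MemLp (fun v : EuclideanSpace ℝ (Fin 3) => exp (-(lam * ‖v‖)) / (4 * π * ‖v‖)) 2 := by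
  have hmem : MemLp (fun v : EuclideanSpace ℝ (Fin 3) => ‖v‖ ^ (-1 : ℝ) * exp (-(lam * ‖v‖))) 2 :=
    memLp_norm_rpow_mul_exp_neg_mul_norm two_ne_zero ENNReal.ofNat_ne_top (by norm_num) hlam
  refine (hmem.const_mul (4 * π)⁻¹).ae_eq (.of_forall fun v => ?_)
  simp only [rpow_neg_one]
  field_simp

section Density

variable {X H : Type*} [MeasurableSpace X] [NormedAddCommGroup H] [NormedSpace ℝ H]
  {μ : Measure X} {U : X → ℝ}

theorem integral_withDensity_ofReal (hU : AEMeasurable U μ) (hU₀ : 0 ≤ᵐ[μ] U) (f : X → H) :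
    ∫ w, f w ∂μ.withDensity (fun w => ENNReal.ofReal (U w)) = ∫ w, U w • f w ∂μ := by
  rw [integral_withDensity_eq_integral_toReal_smul₀ hU.ennreal_ofReal
    (.of_forall fun _ => ENNReal.ofReal_lt_top)]
  refine integral_congr_ae (hU₀.mono fun w hw => ?_)
  simp only [ENNReal.toReal_ofReal hw]

theorem isProbabilityMeasure_withDensity_ofReal (hU : Integrable U μ) (hU₀ : 0 ≤ᵐ[μ] U)
    (hU_int : ∫ w, U w ∂μ = 1) :
    IsProbabilityMeasure (μ.withDensity fun w => ENNReal.ofReal (U w)) := by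
  refine ⟨?_⟩
  rw [withDensity_apply _ .univ, setLIntegral_univ, ← ofReal_integral_eq_lintegral_ofReal hU hU₀,
    hU_int, ENNReal.ofReal_one]

end Density

section Convolution

variable {𝕜 E F : Type*} [NormedField 𝕜] [AddCommGroup E] [TopologicalSpace E]
  [IsTopologicalAddGroup E] [LocallyCompactSpace E] [SecondCountableTopology E]
  [MeasurableSpace E] [BorelSpace E] [NormedAddCommGroup F] [NormedSpace 𝕜 F]
  {μ : Measure E} [μ.IsAddHaarMeasure] {q : ℝ≥0∞} {p : E → 𝕜} {g : E → F}

/-- The translate of `G ∈ Lp F q μ` by `w`, multiplied by the weight `p w`: as a function of `w`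
with values in `Lp F q μ`, this is the integrand of the convolution of `G` with a measure of
density `p`. -/
def weightedTranslate (p : E → 𝕜) (G : Lp F q μ) (w : E) : Lp F q μ :=
  p w • (DomAddAct.mk (-w) +ᵥ G)

namespace weightedTranslate

theorem coeFn_ae_eq (hg : MemLp g q μ) (p : E → 𝕜) (w : E) :
    weightedTranslate p (hg.toLp g) w =ᵐ[μ] fun y => p w • g (y - w) := by
  have htranslate : ⇑(DomAddAct.mk (-w) +ᵥ hg.toLp g) =ᵐ[μ] fun y => g (y - w) := by
    rw [DomAddAct.mk_vadd_toLp]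
    refine (MemLp.coeFn_toLp _).trans (.of_forall fun y => ?_)
    simp only [vadd_eq_add, neg_add_eq_sub]
  filter_upwards [Lp.coeFn_smul (p w) (DomAddAct.mk (-w) +ᵥ hg.toLp g), htranslate]
    with y hsmul hy
  rw [weightedTranslate, hsmul, Pi.smul_apply, hy]

variable [Fact (1 ≤ q)]

theorem continuous [Fact (q ≠ ∞)] (hp : Continuous p) (G : Lp F q μ) :
    Continuous (weightedTranslate p G) :=
  hp.smul ((DomAddAct.continuous_mk.comp continuous_neg).vadd continuous_const)

theorem integral_ae_eq [NormedSpace ℝ F] [CompleteSpace F] {ν : Measure E} [SFinite ν]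
    (hp : AEStronglyMeasurable p ν) (hg : MemLp g q μ)
    (hΦ : Integrable (weightedTranslate p (hg.toLp g)) ν) :
    (∫ w, weightedTranslate p (hg.toLp g) w ∂ν : Lp F q μ) =ᵐ[μ]
      fun y => ∫ w, p w • g (y - w) ∂ν := by
  have hsub : Measure.QuasiMeasurePreserving (fun z : E × E => z.2 - z.1) (ν.prod μ) μ := by
    simpa only [Function.comp_def, neg_add_eq_sub] using
      Measure.quasiMeasurePreserving_snd.comp
        (measurePreserving_prod_neg_add ν μ).quasiMeasurePreserving
  exact integral_Lp_ae_eq_integral (hp.comp_fst.smul (hg.1.comp_quasiMeasurePreserving hsub)) hΦ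
    (coeFn_ae_eq hg p)

end weightedTranslate

variable [T2Space E] [NormedSpace ℝ F] [CompleteSpace F] {K : Set E}

theorem tendsto_eLpNorm_integral_smul_translate {ι : Type*} {l : Filter ι} [l.NeBot]
    {ν : ι → ProbabilityMeasure E} {ν₀ : ProbabilityMeasure E} (hν : Tendsto ν l (𝓝 ν₀))
    (hK : IsCompact K) (hνK : ∀ i, ∀ᵐ w ∂(ν i : Measure E), w ∈ K) (hp : Continuous p)
    (hq₁ : 1 ≤ q) (hq : q ≠ ∞) (hg : MemLp g q μ) :
    Tendsto (fun i => eLpNorm (fun y => (∫ w, p w • g (y - w) ∂(ν i : Measure E)) -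
        ∫ w, p w • g (y - w) ∂(ν₀ : Measure E)) q μ) l (𝓝 0) ∧
      Tendsto (fun i => eLpNorm (fun y => ∫ w, p w • g (y - w) ∂(ν i : Measure E)) q μ) l
        (𝓝 (eLpNorm (fun y => ∫ w, p w • g (y - w) ∂(ν₀ : Measure E)) q μ)) := by
  have : Fact (1 ≤ q) := ⟨hq₁⟩
  have : Fact (q ≠ ∞) := ⟨hq⟩
  have hcont := weightedTranslate.continuous hp (hg.toLp g)
  have hae : ∀ ρ : ProbabilityMeasure E, (∀ᵐ w ∂(ρ : Measure E), w ∈ K) →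
      (∫ w, weightedTranslate p (hg.toLp g) w ∂(ρ : Measure E) : Lp F q μ) =ᵐ[μ]
        fun y => ∫ w, p w • g (y - w) ∂(ρ : Measure E) := fun ρ hρK =>
    weightedTranslate.integral_ae_eq hp.aestronglyMeasurable hg
      (integrable_of_ae_mem_isCompact hK hρK hcont)
  exact tendsto_eLpNorm_of_ae_eq (tendsto_integral_of_isCompact hν hK hνK hcont)
    (fun i => hae (ν i) (hνK i))
    (hae ν₀ (ae_mem_of_tendsto_probabilityMeasure hν hK.isClosed hνK))

theorem tendsto_eLpNorm_average_smul_translate (hK : IsCompact K) {x : (N : ℕ) → Fin N → E}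
    (hx : ∀ N j, x N j ∈ K) {ν : Measure E} [IsProbabilityMeasure ν]
    (hA : ∀ f : E → ℂ, Continuous f → (∃ M, ∀ y, ‖f y‖ ≤ M) →
      Tendsto (fun N : ℕ => (N : ℂ)⁻¹ * ∑ j : Fin N, f (x N j)) atTop (𝓝 (∫ y, f y ∂ν)))
    (hp : Continuous p) (hq₁ : 1 ≤ q) (hq : q ≠ ∞) (hg : MemLp g q μ) :
    Tendsto (fun N : ℕ => eLpNorm (fun y => (N : ℝ)⁻¹ • ∑ j : Fin N, p (x N j) • g (y - x N j) -
        ∫ w, p w • g (y - w) ∂ν) q μ) atTop (𝓝 0) ∧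
      Tendsto (fun N : ℕ => eLpNorm (fun y =>
        (N : ℝ)⁻¹ • ∑ j : Fin N, p (x N j) • g (y - x N j)) q μ) atTop
        (𝓝 (eLpNorm (fun y => ∫ w, p w • g (y - w) ∂ν) q μ)) := by
  have hlim := tendsto_eLpNorm_integral_smul_translate
    (empiricalMeasure.tendsto_of_forall_average_tendsto hA) hK
    (fun n => empiricalMeasure.ae_of_forall (hx (n + 1))) hp hq₁ hq hg
  simp only [empiricalMeasure.integral_eq, ProbabilityMeasure.coe_mk] at hlim
  exact hlim.imp (tendsto_add_atTop_iff_nat 1).1 (tendsto_add_atTop_iff_nat 1).1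

theorem stmt_14_general (κ : Measure E) {U : E → ℝ} (hU₀ : 0 ≤ᵐ[κ] U) (hU_int : ∫ w, U w ∂κ = 1)
    (hK : IsCompact K) {x : (N : ℕ) → Fin N → E} (hx : ∀ N j, x N j ∈ K)
    (hA : ∀ f : E → ℂ, Continuous f → (∃ M, ∀ y, ‖f y‖ ≤ M) →
      Tendsto (fun N : ℕ => (N : ℂ)⁻¹ * ∑ j : Fin N, f (x N j)) atTop
        (𝓝 (∫ y, U y • f y ∂κ)))
    (hp : Continuous p) (hq₁ : 1 ≤ q) (hq : q ≠ ∞) (hg : MemLp g q μ) :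
    Tendsto (fun N : ℕ => eLpNorm (fun y => (N : ℝ)⁻¹ • ∑ j : Fin N, p (x N j) • g (y - x N j) -
        ∫ w, U w • p w • g (y - w) ∂κ) q μ) atTop (𝓝 0) ∧
      Tendsto (fun N : ℕ => eLpNorm (fun y =>
        (N : ℝ)⁻¹ • ∑ j : Fin N, p (x N j) • g (y - x N j)) q μ) atTop
        (𝓝 (eLpNorm (fun y => ∫ w, U w • p w • g (y - w) ∂κ) q μ)) := by
  have hU : Integrable U κ := .of_integral_ne_zero (hU_int ▸ one_ne_zero)
  have := isProbabilityMeasure_withDensity_ofReal hU hU₀ hU_int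
  simp only [← integral_withDensity_ofReal hU.aemeasurable hU₀] at hA ⊢
  exact tendsto_eLpNorm_average_smul_translate hK hx hA hp hq₁ hq hg

end Convolution

/-- (d = 3, free Green function `g_λ(x) = e^{−λ|x|}/(4π|x|)`). Under
Assumption (A), for continuous `p : ℝ³ → ℂ`, the functions
`Ψ_N = (1/N)·Σ_j p(x_{N,j})·g_λ(·−x_{N,j})` converge strongly in `L²(ℝ³)` to
`g_λ * (p·U)`; in particular their `L²` norms converge. -/
theorem stmt_14
    (lam : ℝ) (hlam : 0 < lam)
    (U : EuclideanSpace ℝ (Fin 3) → ℝ)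
    (hU_nonneg : ∀ y, 0 ≤ U y)
    (hU_bdd : ∃ M : ℝ, ∀ y, U y ≤ M)
    (hU_supp : HasCompactSupport U)
    (hU_int : ∫ y, U y = 1)
    (x : (N : ℕ) → Fin N → EuclideanSpace ℝ (Fin 3))
    (hx_supp : ∀ N (j : Fin N), x N j ∈ tsupport U)
    (hA : ∀ f : EuclideanSpace ℝ (Fin 3) → ℂ, Continuous f → (∃ M, ∀ y, ‖f y‖ ≤ M) →
      Tendsto (fun N : ℕ => (N : ℂ)⁻¹ * ∑ j : Fin N, f (x N j)) atTop
        (𝓝 (∫ y, f y * (U y : ℂ))))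
    (p : EuclideanSpace ℝ (Fin 3) → ℂ)
    (hp : Continuous p)
    (g : EuclideanSpace ℝ (Fin 3) → ℝ)
    (hg : g = fun v => Real.exp (-(lam * ‖v‖)) / (4 * π * ‖v‖))
    (Ψ : (N : ℕ) → EuclideanSpace ℝ (Fin 3) → ℂ)
    (hΨ : ∀ N : ℕ, Ψ N = fun y =>
      (N : ℂ)⁻¹ * ∑ j : Fin N, p (x N j) * ((g (y - x N j) : ℝ) : ℂ))
    (conv : EuclideanSpace ℝ (Fin 3) → ℂ)
    (hconv : conv = fun y => ∫ w, ((g (y - w) : ℝ) : ℂ) * p w * (U w : ℂ)) :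
    Tendsto (fun N : ℕ => eLpNorm (fun y => Ψ N y - conv y) 2 volume) atTop (𝓝 0) ∧
    Tendsto (fun N : ℕ => eLpNorm (Ψ N) 2 volume) atTop (𝓝 (eLpNorm conv 2 volume)) := by
  have hg_mem : MemLp (fun v => (g v : ℂ)) 2 volume :=
    (hg ▸ memLp_two_exp_neg_mul_norm_div hlam : MemLp g 2 volume).ofReal
  simpa only [hconv, hΨ, Complex.real_smul, smul_eq_mul, Complex.ofReal_inv,
    Complex.ofReal_natCast, mul_comm, mul_left_comm] using
    stmt_14_general volume (.of_forall hU_nonneg) hU_int hU_supp.isCompact hx_supp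
      (by simpa only [Complex.real_smul, mul_comm] using hA) hp one_le_two ENNReal.ofNat_ne_top
      hg_mem
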